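/- Let n ≥ 5 and let G be a connected simple undirected graph with n vertices and m edges, where n ≤ m < 2(n-2). Then the number of 4-cycles in G is at most C(m-n+2, 2) = (m-n+2)(m-n+1)/2. -/

import Mathlib

open Finset

/-- The number of quadrangles (4-cycles) of a simple graph: each 4-cycle corresponds
to exactly 8 cyclically adjacent quadruples of distinct vertices. -/
noncomputable def quadCount {n : ℕ} (G : SimpleGraph (Fin n)) : ℕ :=
  letI := Classical.decRel G.Adj
  (Finset.univ.filter (fun p : Fin n × Fin n × Fin n × Fin n =>
      p.1 ≠ p.2.1 ∧ p.1 ≠ p.2.2.1 ∧ p.1 ≠ p.2.2.2 ∧ p.2.1 ≠ p.2.2.1 ∧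
      p.2.1 ≠ p.2.2.2 ∧ p.2.2.1 ≠ p.2.2.2 ∧
      G.Adj p.1 p.2.1 ∧ G.Adj p.2.1 p.2.2.1 ∧ G.Adj p.2.2.1 p.2.2.2 ∧
      G.Adj p.2.2.2 p.1)).card / 8

/-! Let `W` be the space of edge weights `ℚ^E` modulo the weights `uv ↦ y u + y v` for `y : V → ℚ`.
On each connected component the kernel of `y ↦ (uv ↦ y u + y v)` is at most one-dimensional, so
`dim W ≤ m - n + c` for a graph with `n` vertices, `m` edges and `c` components. The alternating sum
`w(ab) - w(bc) + w(cd) - w(da)` around a 4-cycle descends to a linear form on `W`. The squares of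
these forms are linearly independent: evaluating their polarizations at two disjoint edges `e, f`
detects whether the cycle contains both, and the 4-cycles containing `ab` and `cd` are among `abcd`
and `abdc`, so the combination `(ab, cd) + (bc, da) - (ac, bd)` singles out the cycle `abcd`.
Hence there are at most `dim Sym² W = C(dim W + 1, 2)` cycles of length 4.
-/

theorem card_le_choose_two_of_linearIndependent_mul {K M ι : Type*} [Field K]
    [AddCommGroup M] [Module K M] [Module.Finite K M] [Fintype ι] {φ : ι → M →ₗ[K] K}
    (h : LinearIndependent K fun i x y ↦ φ i x * φ i y) :
    Fintype.card ι ≤ (Module.finrank K M + 1).choose 2 := by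
  let b := Module.finBasis K M
  let coeff (i : ι) (z : Sym2 (Fin (Module.finrank K M))) : K := (z.map (φ i ∘ b)).mul
  have hcoeff : LinearIndependent K coeff := by
    rw [Fintype.linearIndependent_iff] at h ⊢
    refine fun g hg ↦ h g ?_
    have hform : ∑ i, g i • LinearMap.BilinForm.linMulLin (φ i) (φ i) = 0 :=
      LinearMap.BilinForm.ext_basis b fun k l ↦ by simpa [coeff] using congr($hg s(k, l))
    ext x y
    simpa using congr($hform x y)
  simpa [Sym2.card] using hcoeff.fintype_card_le_finrank

section EndpointSum

variable {V : Type*} {G : SimpleGraph V}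

/-- The transpose of the unsigned incidence matrix of `G`: it sends a vertex weight `y` to the edge
weight `uv ↦ y u + y v`. -/
def endpointSum (G : SimpleGraph V) : (V → ℚ) →ₗ[ℚ] (G.edgeSet → ℚ) where
  toFun y e := (e.1.map y).add
  map_add' y z := by
    ext ⟨e, he⟩
    induction e
    simp [add_add_add_comm]
  map_smul' r y := by
    ext ⟨e, he⟩
    induction e
    simp [mul_add]

/-- The space of edge weights modulo endpoint sums. Its dual consists of the edge weights whose sum
at every vertex is zero. -/
abbrev EndpointSumCokernel (G : SimpleGraph V) : Type _ :=
  (G.edgeSet → ℚ) ⧸ LinearMap.range (endpointSum G)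

open Classical in
/-- The class of the indicator function of `e`; it is zero when `e` is not an edge of `G`. -/
noncomputable def edgeClass (G : SimpleGraph V) (e : Sym2 V) : EndpointSumCokernel G :=
  Submodule.Quotient.mk fun f ↦ if e = f then 1 else 0

theorem eq_zero_of_reachable_of_endpointSum_eq_zero {y : V → ℚ} (hy : endpointSum G y = 0)
    {u v : V} (huv : G.Reachable u v) (hu : y u = 0) : y v = 0 := by
  obtain ⟨w⟩ := huv
  induction w with
  | nil => exact hu
  | cons hadj _ ih =>
    refine ih ?_
    simpa [endpointSum, hu] using congr($hy ⟨s(_, _), hadj⟩)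

theorem finrank_ker_endpointSum_le [Finite V] (G : SimpleGraph V) :
    Module.finrank ℚ (LinearMap.ker (endpointSum G)) ≤ Nat.card G.ConnectedComponent := by
  have := Fintype.ofFinite G.ConnectedComponent
  let valuesAtReps : LinearMap.ker (endpointSum G) →ₗ[ℚ] (G.ConnectedComponent → ℚ) :=
    LinearMap.funLeft ℚ ℚ Quot.out ∘ₗ (LinearMap.ker (endpointSum G)).subtype
  have hinj : Function.Injective valuesAtReps := by
    refine (injective_iff_map_eq_zero valuesAtReps).2 fun y hy ↦ Subtype.ext (funext fun v ↦ ?_)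
    exact eq_zero_of_reachable_of_endpointSum_eq_zero y.2
      (SimpleGraph.ConnectedComponent.exact (Quot.out_eq _)) congr($hy (G.connectedComponentMk v))
  simpa using LinearMap.finrank_le_finrank_of_injective hinj

theorem finrank_endpointSumCokernel_add_card_le [Finite V] (G : SimpleGraph V) :
    Module.finrank ℚ (EndpointSumCokernel G) + Nat.card V ≤
      G.edgeSet.ncard + Nat.card G.ConnectedComponent := by
  have := Fintype.ofFinite V
  have := Fintype.ofFinite G.edgeSet
  have hcoker := (LinearMap.range (endpointSum G)).finrank_quotient_add_finrank
  have hrange := (endpointSum G).finrank_range_add_finrank_ker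
  have hker := finrank_ker_endpointSum_le G
  simp only [Module.finrank_fintype_fun_eq_card, ← Nat.card_eq_fintype_card,
    Nat.card_coe_set_eq] at hcoker hrange
  lia

end EndpointSum

section FourCycles

variable {V : Type*} {G : SimpleGraph V} {a b c d : V}

/-- The closed walk `a, b, c, d, a` traverses a 4-cycle of `G`. -/
structure IsFourCycle (G : SimpleGraph V) (a b c d : V) : Prop where
  adj₁₂ : G.Adj a b
  adj₂₃ : G.Adj b c
  adj₃₄ : G.Adj c d
  adj₄₁ : G.Adj d a
  ne₁₃ : a ≠ c
  ne₂₄ : b ≠ d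

/-- The set of edges traversed by the closed walk `a, b, c, d, a`. -/
def fourCycleEdges (a b c d : V) : Set (Sym2 V) := {s(a, b), s(b, c), s(c, d), s(d, a)}

/-- The 4-cycles of `G`. A cycle is encoded by its edge set, which forgets the base point and the
direction of traversal. -/
def fourCycles (G : SimpleGraph V) : Set (Set (Sym2 V)) :=
  {F | ∃ a b c d, IsFourCycle G a b c d ∧ fourCycleEdges a b c d = F}

theorem IsFourCycle.rotate (h : IsFourCycle G a b c d) : IsFourCycle G b c d a :=
  ⟨h.adj₂₃, h.adj₃₄, h.adj₄₁, h.adj₁₂, h.ne₂₄, h.ne₁₃.symm⟩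

theorem IsFourCycle.reverse (h : IsFourCycle G a b c d) : IsFourCycle G d c b a :=
  ⟨h.adj₃₄.symm, h.adj₂₃.symm, h.adj₁₂.symm, h.adj₄₁.symm, h.ne₂₄.symm, h.ne₁₃.symm⟩

theorem IsFourCycle.nodup (h : IsFourCycle G a b c d) : [a, b, c, d].Nodup := by
  simp [h.adj₁₂.ne, h.ne₁₃, h.adj₄₁.ne', h.adj₂₃.ne, h.ne₂₄, h.adj₃₄.ne]

theorem fourCycleEdges_rotate (a b c d : V) :
    fourCycleEdges b c d a = fourCycleEdges a b c d := by
  grind [fourCycleEdges]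

theorem fourCycleEdges_reverse (a b c d : V) :
    fourCycleEdges d c b a = fourCycleEdges a b c d := by
  grind [fourCycleEdges, Sym2.eq_swap]

theorem fourCycleEdges_ne_swap (h : [a, b, c, d].Nodup) :
    fourCycleEdges a b c d ≠ fourCycleEdges a b d c := by
  intro heq
  have hbc : s(b, c) ∈ fourCycleEdges a b d c := heq ▸ by simp [fourCycleEdges]
  grind [fourCycleEdges, Sym2.eq_iff]

theorem exists_isFourCycle_of_mem {F : Set (Sym2 V)} (hF : F ∈ fourCycles G) (hab : s(a, b) ∈ F) :
    ∃ c d, IsFourCycle G a b c d ∧ fourCycleEdges a b c d = F := by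
  obtain ⟨p, q, r, s, h, rfl⟩ := hF
  wlog hfirst : s(a, b) = s(p, q) generalizing p q r s
  · obtain h₁ | h₂ | h₃ | h₄ := hab
    · exact this p q r s h (.inl h₁) h₁
    · rw [← fourCycleEdges_rotate]
      exact this q r s p h.rotate (.inl h₂) h₂
    · rw [← fourCycleEdges_rotate, ← fourCycleEdges_rotate]
      exact this r s p q h.rotate.rotate (.inl h₃) h₃
    · rw [fourCycleEdges_rotate s p q r]
      exact this s p q r h.rotate.rotate.rotate (.inl h₄) h₄
  obtain ⟨rfl, rfl⟩ | ⟨rfl, rfl⟩ := Sym2.eq_iff.1 hfirst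
  · exact ⟨r, s, h, rfl⟩
  · refine ⟨s, r, h.reverse.rotate.rotate, ?_⟩
    rw [fourCycleEdges_rotate r, fourCycleEdges_rotate s, fourCycleEdges_reverse]

theorem mem_and_mem_iff_of_mem_fourCycles {F : Set (Sym2 V)} (hF : F ∈ fourCycles G)
    (h : [a, b, c, d].Nodup) :
    s(a, b) ∈ F ∧ s(c, d) ∈ F ↔ F = fourCycleEdges a b c d ∨ F = fourCycleEdges a b d c := by
  constructor
  · rintro ⟨hab, hcd⟩
    obtain ⟨x, y, -, rfl⟩ := exists_isFourCycle_of_mem hF hab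
    have hxy : s(c, d) = s(x, y) := by grind [fourCycleEdges, Sym2.eq_iff]
    obtain ⟨rfl, rfl⟩ | ⟨rfl, rfl⟩ := Sym2.eq_iff.1 hxy <;> simp
  · rintro (rfl | rfl) <;> simp [fourCycleEdges, Sym2.eq_swap]

open Classical in
theorem ite_add_ite_sub_ite_eq_of_mem_fourCycles {F : Set (Sym2 V)} (hF : F ∈ fourCycles G)
    (h : [a, b, c, d].Nodup) :
    ((if s(a, b) ∈ F ∧ s(c, d) ∈ F then 1 else 0) + (if s(b, c) ∈ F ∧ s(d, a) ∈ F then 1 else 0) -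
      (if s(a, c) ∈ F ∧ s(b, d) ∈ F then 1 else 0) : ℚ) =
      if F = fourCycleEdges a b c d then 2 else 0 := by
  have hbcda : [b, c, d, a].Nodup := by grind
  have hacbd : [a, c, b, d].Nodup := by grind
  have hbcad : fourCycleEdges b c a d = fourCycleEdges a c b d := by
    rw [fourCycleEdges_rotate d, ← fourCycleEdges_reverse]
  have hacdb : fourCycleEdges a c d b = fourCycleEdges a b d c := by
    rw [← fourCycleEdges_rotate a, ← fourCycleEdges_reverse]
  have hne₁ := fourCycleEdges_ne_swap h
  have hne₂ := fourCycleEdges_ne_swap hbcda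
  have hne₃ := fourCycleEdges_ne_swap hacbd
  rw [fourCycleEdges_rotate, hbcad] at hne₂
  rw [hacdb] at hne₃
  simp only [mem_and_mem_iff_of_mem_fourCycles hF, h, hbcda, hacbd, fourCycleEdges_rotate a,
    hbcad, hacdb]
  grind

end FourCycles

section AlternatingSum

variable {V : Type*} {G : SimpleGraph V} {a b c d : V}

/-- The alternating sum of an edge weight around a 4-cycle, as a linear form on edge weights. -/
def IsFourCycle.alternatingSum (h : IsFourCycle G a b c d) : (G.edgeSet → ℚ) →ₗ[ℚ] ℚ :=
  .proj ⟨s(a, b), h.adj₁₂⟩ - .proj ⟨s(b, c), h.adj₂₃⟩ + .proj ⟨s(c, d), h.adj₃₄⟩ -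
    .proj ⟨s(d, a), h.adj₄₁⟩

theorem IsFourCycle.range_endpointSum_le_ker (h : IsFourCycle G a b c d) :
    LinearMap.range (endpointSum G) ≤ LinearMap.ker h.alternatingSum := by
  rintro _ ⟨y, rfl⟩
  simp only [alternatingSum, endpointSum, LinearMap.mem_ker, LinearMap.sub_apply,
    LinearMap.add_apply, LinearMap.proj_apply, LinearMap.coe_mk, AddHom.coe_mk, Sym2.map_mk,
    Sym2.add_mk]
  ring

/-- The linear form induced by `IsFourCycle.alternatingSum` modulo endpoint sums. -/
def IsFourCycle.form (h : IsFourCycle G a b c d) : EndpointSumCokernel G →ₗ[ℚ] ℚ :=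
  Submodule.liftQ _ h.alternatingSum h.range_endpointSum_le_ker

open Classical in
theorem IsFourCycle.form_edgeClass (h : IsFourCycle G a b c d) (e : Sym2 V) :
    h.form (edgeClass G e) =
      if e = s(a, b) ∨ e = s(c, d) then 1 else if e = s(b, c) ∨ e = s(d, a) then -1 else 0 := by
  have hedges : [s(a, b), s(b, c), s(c, d), s(d, a)].Nodup := by
    grind [h.nodup, Sym2.eq_iff]
  simp only [form, edgeClass, alternatingSum, Submodule.liftQ_apply, LinearMap.sub_apply,
    LinearMap.add_apply, LinearMap.proj_apply]
  grind

open Classical in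
theorem IsFourCycle.form_mul_form_edgeClass (h : IsFourCycle G a b c d) {p q r s : V}
    (hpqrs : [p, q, r, s].Nodup) :
    h.form (edgeClass G s(p, q)) * h.form (edgeClass G s(r, s)) =
      if s(p, q) ∈ fourCycleEdges a b c d ∧ s(r, s) ∈ fourCycleEdges a b c d then 1 else 0 := by
  simp only [form_edgeClass, fourCycleEdges, Set.mem_insert_iff, Set.mem_singleton_iff,
    Sym2.eq_iff]
  grind [h.nodup]

theorem exists_linearIndependent_mul_fourCycles (G : SimpleGraph V) :
    ∃ φ : fourCycles G → EndpointSumCokernel G →ₗ[ℚ] ℚ,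
      LinearIndependent ℚ fun F x y ↦ φ F x * φ F y := by
  classical
  choose A B C D hcycle hedges using fun F : fourCycles G ↦ F.2
  refine ⟨fun F ↦ (hcycle F).form, linearIndependent_iff'.2 ?_⟩
  rintro S g hg ⟨_, a, b, c, d, h, rfl⟩ hS
  have hsum {p q r s} (hpqrs : [p, q, r, s].Nodup) :
      ∑ F ∈ S, g F * (if s(p, q) ∈ F.1 ∧ s(r, s) ∈ F.1 then 1 else 0) = 0 := by
    simpa [(hcycle _).form_mul_form_edgeClass hpqrs, hedges] using
      congr($hg (edgeClass G s(p, q)) (edgeClass G s(r, s)))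
  have hacbd : [a, c, b, d].Nodup := by grind [h.nodup]
  have hisolate : ∑ F ∈ S, g F * (if F.1 = fourCycleEdges a b c d then 2 else 0) = 0 := by
    simp only [← ite_add_ite_sub_ite_eq_of_mem_fourCycles (Subtype.prop _) h.nodup, mul_sub,
      mul_add, sum_sub_distrib, sum_add_distrib, hsum h.nodup, hsum h.rotate.nodup, hsum hacbd,
      add_zero, sub_zero]
  have hsingle (F : fourCycles G) :
      F.1 = fourCycleEdges a b c d ↔ F = ⟨_, a, b, c, d, h, rfl⟩ := by rw [Subtype.ext_iff]
  simpa [hsingle, hS] using hisolate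

end AlternatingSum

theorem quadCount_le_of_connected_general {V : Type*} [Finite V] (G : SimpleGraph V) :
    (fourCycles G).ncard ≤
      (G.edgeSet.ncard + Nat.card G.ConnectedComponent + 1 - Nat.card V).choose 2 := by
  have := Fintype.ofFinite (fourCycles G)
  obtain ⟨φ, hφ⟩ := exists_linearIndependent_mul_fourCycles G
  have hdim := finrank_endpointSumCokernel_add_card_le G
  calc (fourCycles G).ncard = Fintype.card (fourCycles G) := by
        rw [← Nat.card_coe_set_eq, Nat.card_eq_fintype_card]
    _ ≤ (Module.finrank ℚ (EndpointSumCokernel G) + 1).choose 2 :=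
        card_le_choose_two_of_linearIndependent_mul hφ
    _ ≤ _ := Nat.choose_le_choose 2 (by lia)

section Traversals

variable {V : Type*} {G : SimpleGraph V} {a b c d : V}

theorem IsFourCycle.eq_and_eq_of_fourCycleEdges_eq {c' d' : V} (h : IsFourCycle G a b c d)
    (h' : IsFourCycle G a b c' d') (heq : fourCycleEdges a b c d = fourCycleEdges a b c' d') :
    c = c' ∧ d = d' := by
  have hbc : s(b, c) ∈ fourCycleEdges a b c' d' := heq ▸ by simp [fourCycleEdges]
  have hda : s(d, a) ∈ fourCycleEdges a b c' d' := heq ▸ by simp [fourCycleEdges]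
  grind [fourCycleEdges, Sym2.eq_iff, h.nodup, h'.nodup]

open Classical in
theorem card_isFourCycle_fourCycleEdges_eq_le [Fintype V] (G : SimpleGraph V) (a b c d : V) :
    #{p : V × V × V × V | IsFourCycle G p.1 p.2.1 p.2.2.1 p.2.2.2 ∧
      fourCycleEdges p.1 p.2.1 p.2.2.1 p.2.2.2 = fourCycleEdges a b c d} ≤ 8 := by
  let darts := [(a, b), (b, a), (b, c), (c, b), (c, d), (d, c), (d, a), (a, d)]
  -- A traversal of a given cycle is determined by its first dart.
  refine (card_le_card_of_injOn (fun p ↦ (p.1, p.2.1)) (t := darts.toFinset) ?_ ?_).trans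
    (List.toFinset_card_le _)
  · rintro ⟨p, q, r, s⟩ hp
    have hpq : s(p, q) ∈ fourCycleEdges a b c d := by
      rw [← (mem_filter_univ _).1 hp |>.2]
      simp [fourCycleEdges]
    simpa [darts, fourCycleEdges, or_assoc] using hpq
  · rintro ⟨p, q, r, s⟩ h ⟨p', q', r', s'⟩ h' hdart
    obtain ⟨hcycle, hedges⟩ := (mem_filter_univ _).1 h
    obtain ⟨hcycle', hedges'⟩ := (mem_filter_univ _).1 h'
    obtain ⟨rfl, rfl⟩ : p = p' ∧ q = q' := Prod.mk.inj hdart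
    obtain ⟨rfl, rfl⟩ :=
      hcycle.eq_and_eq_of_fourCycleEdges_eq hcycle' (hedges.trans hedges'.symm)
    rfl

open Classical in
theorem card_isFourCycle_le [Fintype V] (G : SimpleGraph V) :
    #{p : V × V × V × V | IsFourCycle G p.1 p.2.1 p.2.2.1 p.2.2.2} ≤
      8 * (fourCycles G).ncard := by
  let edges (p : V × V × V × V) := fourCycleEdges p.1 p.2.1 p.2.2.1 p.2.2.2
  refine (card_le_mul_card_image (f := edges) _ 8 ?_).trans (Nat.mul_le_mul_left 8 ?_)
  · intro F hF
    obtain ⟨p, -, rfl⟩ := mem_image.1 hF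
    rw [filter_filter]
    exact card_isFourCycle_fourCycleEdges_eq_le G ..
  · rw [← Set.ncard_coe_finset]
    refine Set.ncard_le_ncard fun F hF ↦ ?_
    obtain ⟨p, hp, rfl⟩ := mem_image.1 hF
    exact ⟨p.1, p.2.1, p.2.2.1, p.2.2.2, (mem_filter_univ p).1 hp, rfl⟩

end Traversals

open Classical in
theorem quadCount_eq_card_isFourCycle_div {n : ℕ} (G : SimpleGraph (Fin n)) :
    quadCount G = #{p : Fin n × Fin n × Fin n × Fin n |
      IsFourCycle G p.1 p.2.1 p.2.2.1 p.2.2.2} / 8 := by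
  unfold quadCount
  congr 2
  ext p
  grind [IsFourCycle, SimpleGraph.Adj.ne]

theorem quadCount_le_ncard_fourCycles {n : ℕ} (G : SimpleGraph (Fin n)) :
    quadCount G ≤ (fourCycles G).ncard := by
  rw [quadCount_eq_card_isFourCycle_div]
  exact Nat.div_le_of_le_mul (card_isFourCycle_le G)

/-- A connected graph with `n ≥ 5` vertices and `m` edges, `n ≤ m < 2(n-2)`,
has at most `C(m-n+2, 2)` quadrangles. -/
theorem quadCount_le_of_connected
    {n m : ℕ} (hn : 5 ≤ n) (G : SimpleGraph (Fin n)) [DecidableRel G.Adj]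
    (hconn : G.Connected) (hm : G.edgeFinset.card = m)
    (hnm : n ≤ m) (hm2 : m < 2 * (n - 2)) :
    quadCount G ≤ Nat.choose (m - n + 2) 2 := by
  have hedges : G.edgeSet.ncard = m := by rw [← hm, ← Set.ncard_coe_finset, G.coe_edgeFinset]
  have hcomp : Nat.card G.ConnectedComponent = 1 :=
    have := hconn.nonempty
    Nat.card_eq_one_iff_unique.2
      ⟨hconn.preconnected.subsingleton_connectedComponent, inferInstance⟩
  have hgeneral := quadCount_le_of_connected_general G
  rw [hedges, hcomp, Nat.card_fin, show m + 1 + 1 - n = m - n + 2 by lia] at hgeneral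
  exact (quadCount_le_ncard_fourCycles G).trans hgeneral
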